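/- arXiv:1612.02536 — 2 statements merged into one kernel-verified Lean document; each statement's English description precedes it below -/
import Mathlib

section
/- Let $d\le m$, let $A:[0,\infty)\to\mathbb{R}^{d\times d}$ and $B:[0,\infty)\to\mathbb{R}^{d\times m}$ be continuous with $\operatorname{rank} B(0)=d$, and let $Z:[0,\infty)\to\mathbb{R}^{d\times m}$ be differentiable with $Z(0)=0$ and $Z'(t)=A(t)Z(t)+B(t)$ for all $t\ge 0$. Then there exists $\delta_0>0$ such that $\operatorname{rank} Z(\delta)=d$ for every $\delta\in(0,\delta_0]$. -/
open Filter Topology in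
/-- A matrix curve whose entries vanish at `0` and have right derivative `B` there, with `B` of
full row rank, has full row rank at all sufficiently small positive times. -/
theorem eventually_rank_eq_of_hasDerivWithinAt {d m : ℕ} {Z : ℝ → Matrix (Fin d) (Fin m) ℝ}
    {B : Matrix (Fin d) (Fin m) ℝ} (hB : B.rank = d) (hZ0 : Z 0 = 0)
    (hZ : ∀ i j, HasDerivWithinAt (fun s => Z s i j) (B i j) (Set.Ici 0) 0) :
    ∀ᶠ t in 𝓝[>] (0 : ℝ), (Z t).rank = d := by
  have hlim : Tendsto (fun t : ℝ => t⁻¹ • Z t) (𝓝[>] 0) (𝓝 B) := by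
    refine tendsto_pi_nhds.2 fun i => tendsto_pi_nhds.2 fun j => ?_
    have h := (hasDerivWithinAt_iff_tendsto_slope' Set.self_notMem_Ioi).1 (hZ i j).Ioi_of_Ici
    refine h.congr fun t => ?_
    simp [slope_def_field, hZ0, div_eq_inv_mul]
  have hdet : (B * B.transpose).det ≠ 0 := by
    have hrank : (B * B.transpose).rank = Fintype.card (Fin d) := by
      rw [Matrix.rank_self_mul_transpose, hB, Fintype.card_fin]
    have hunit : IsUnit (B * B.transpose) := by
      rw [← Matrix.linearIndependent_rows_iff_isUnit, linearIndependent_iff_card_eq_finrank_span,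
        ← hrank, Matrix.rank_eq_finrank_span_row]
      rfl
    exact ((Matrix.isUnit_iff_isUnit_det _).1 hunit).ne_zero
  have hcont : Continuous fun M : Matrix (Fin d) (Fin m) ℝ => (M * B.transpose).det := by
    fun_prop
  filter_upwards [((hcont.tendsto B).comp hlim).eventually_ne hdet] with t ht
  have hfull : (t⁻¹ • Z t * B.transpose).rank = d := by
    rw [Matrix.rank_of_isUnit _ ((Matrix.isUnit_iff_isUnit_det _).2 (isUnit_iff_ne_zero.2 ht)),
      Fintype.card_fin]
  refine le_antisymm (Matrix.rank_le_height _) ?_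
  rw [Matrix.smul_mul, ← Matrix.mul_smul] at hfull
  exact hfull.ge.trans (Matrix.rank_mul_le_left _ _)


/-- if `Z(0) = 0`, `Z' = AZ + B` on `[0,∞)` with `A, B` continuous and
`rank B(0) = d ≤ m`, then `rank Z(δ) = d` for all sufficiently small `δ > 0`. -/
theorem stmt_3 (d m : ℕ) (hdm : d ≤ m)
    (A : ℝ → Matrix (Fin d) (Fin d) ℝ)
    (B : ℝ → Matrix (Fin d) (Fin m) ℝ)
    (hA : ContinuousOn A (Set.Ici 0))
    (hB : ContinuousOn B (Set.Ici 0))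
    (hrankB : (B 0).rank = d)
    (Z : ℝ → Matrix (Fin d) (Fin m) ℝ)
    (hZ0 : Z 0 = 0)
    (hZ : ∀ t ≥ (0:ℝ), ∀ (i : Fin d) (j : Fin m),
      HasDerivWithinAt (fun s => Z s i j) ((A t * Z t + B t) i j) (Set.Ici 0) t) :
    ∃ δ0 > (0:ℝ), ∀ δ ∈ Set.Ioc (0:ℝ) δ0, (Z δ).rank = d := by
  have hev : ∀ᶠ t in nhdsWithin (0 : ℝ) (Set.Ioi 0), (Z t).rank = d :=
    eventually_rank_eq_of_hasDerivWithinAt hrankB hZ0 fun i j => by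
      simpa [hZ0] using hZ 0 le_rfl i j
  obtain ⟨δ0, hpos, hδ⟩ := mem_nhdsGT_iff_exists_Ioc_subset.1 hev
  exact ⟨δ0, hpos, fun δ h => hδ h⟩
end

section
/- Fix $T>0$, $\lambda>0$, $\sigma>0$. For each $N\in\mathbb{N}$, set $\delta_N=T/N$ and let $y^{(N)}_0,\dots,y^{(N)}_N$ be real numbers; define $S_N=\sum_{k=0}^{N-1}(y^{(N)}_{k+1}-y^{(N)}_k)^2$, $Q_N=\delta_N\sum_{k=0}^{N-1}(y^{(N)}_k)^2$, $R_N=\sum_{k=0}^{N-1}y^{(N)}_k(y^{(N)}_{k+1}-y^{(N)}_k)$, and the log-likelihood $\ell_N=-\frac N2\log(2\pi\sigma^2)-\frac{T}{\delta_N}\log\Big(\frac{1-e^{-\lambda\delta_N}}{\lambda\delta_N}\Big)-\frac{\lambda^2\delta_N}{2\sigma^2(1-e^{-\lambda\delta_N})^2}\sum_{k=0}^{N-1}\big(y^{(N)}_{k+1}-y^{(N)}_k e^{-\lambda\delta_N}\big)^2$. If $S_N\to S$, $Q_N\to Q$ and $R_N\to R$ as $N\to\infty$, then $\ell_N+\frac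 N2\log(2\pi\sigma^2)+\frac{N}{2\sigma^2 T}S_N\;\longrightarrow\;\frac{\lambda T}{2}-\frac{\lambda S}{2\sigma^2}-\frac{\lambda^2 Q}{2\sigma^2}-\frac{\lambda R}{\sigma^2}.$ -/
open Filter Topology

/-- The function `x ↦ (1 - exp (-x)) / x`, extended continuously by `1` at `0`. -/
noncomputable def expQuotient (x : ℝ) : ℝ :=
  if x = 0 then 1 else (1 - Real.exp (-x)) / x

lemma expQuotient_zero : expQuotient 0 = 1 := by simp [expQuotient]

lemma expQuotient_of_ne {x : ℝ} (hx : x ≠ 0) :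
    expQuotient x = (1 - Real.exp (-x)) / x := by simp [expQuotient, hx]

lemma abs_slope_expQuotient_le {x : ℝ} (hx : x ≠ 0) (hx1 : |x| ≤ 1) :
    |x⁻¹ * (expQuotient x - 1) + 1 / 2| ≤ |x| := by
  have hb := Real.exp_bound (x := -x) (by simpa using hx1) (n := 3) (by norm_num)
  simp only [Finset.sum_range_succ, Finset.sum_range_zero, abs_neg] at hb
  norm_num [Nat.factorial] at hb
  have hpos : 0 < |x| := abs_pos.mpr hx
  have key : x⁻¹ * (expQuotient x - 1) + 1 / 2
      = -(Real.exp (-x) - (1 + -x + x ^ 2 / 2)) / x ^ 2 := by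
    rw [expQuotient_of_ne hx]
    field_simp
    ring
  rw [key, abs_div, abs_neg, abs_pow, div_le_iff₀ (by positivity)]
  refine hb.trans ?_
  nlinarith [pow_pos hpos 3]

lemma hasDerivAt_expQuotient_zero : HasDerivAt expQuotient (-1 / 2) 0 := by
  rw [hasDerivAt_iff_tendsto_slope_zero]
  have habs : Tendsto (fun x : ℝ => |x|) (𝓝[≠] 0) (𝓝 0) := by
    simpa using (continuous_abs.tendsto (0 : ℝ)).mono_left nhdsWithin_le_nhds
  rw [tendsto_iff_norm_sub_tendsto_zero]
  refine squeeze_zero' (Eventually.of_forall fun _ => norm_nonneg _) ?_ habs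
  filter_upwards [self_mem_nhdsWithin, habs.eventually (ge_mem_nhds zero_lt_one)] with x hx hx1
  have h := abs_slope_expQuotient_le hx hx1
  rw [Real.norm_eq_abs, zero_add, expQuotient_zero, smul_eq_mul]
  convert h using 2
  ring

lemma tendsto_log_expQuotient_div :
    Tendsto (fun x => Real.log (expQuotient x) / x) (𝓝[≠] 0) (𝓝 (-1 / 2)) := by
  have h := hasDerivAt_expQuotient_zero.log (by simp [expQuotient_zero])
  rw [hasDerivAt_iff_tendsto_slope_zero] at h
  simpa [expQuotient_zero, div_eq_inv_mul] using h

lemma tendsto_inv_sq_expQuotient_sub_one_div :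
    Tendsto (fun x => ((expQuotient x ^ 2)⁻¹ - 1) / x) (𝓝[≠] 0) (𝓝 1) := by
  have h := (hasDerivAt_expQuotient_zero.fun_pow 2).fun_inv (by simp [expQuotient_zero])
  rw [hasDerivAt_iff_tendsto_slope_zero] at h
  simpa [expQuotient_zero, div_eq_inv_mul] using h

lemma tendsto_inv_expQuotient :
    Tendsto (fun x => (expQuotient x)⁻¹) (𝓝[≠] 0) (𝓝 1) := by
  have h := hasDerivAt_expQuotient_zero.continuousAt.tendsto.mono_left
    (nhdsWithin_le_nhds (s := {0}ᶜ))
  simpa [expQuotient_zero] using h.inv₀ (by simp [expQuotient_zero])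

lemma sum_sq_sub_mul (y : ℕ → ℝ) (r : ℝ) (N : ℕ) :
    ∑ k ∈ Finset.range N, (y (k + 1) - y k * r) ^ 2
      = ∑ k ∈ Finset.range N, (y (k + 1) - y k) ^ 2
        + 2 * (1 - r) * ∑ k ∈ Finset.range N, y k * (y (k + 1) - y k)
        + (1 - r) ^ 2 * ∑ k ∈ Finset.range N, y k ^ 2 := by
  simp only [Finset.mul_sum, ← Finset.sum_add_distrib]
  exact Finset.sum_congr rfl fun k _ => by ring

/-- two-scale expansion of the OU log-likelihood. If the discrete
quadratic variation `S_N`, discrete `L²` norm `Q_N` and discrete stochastic-integral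
sum `R_N` converge, then
`ℓ_N + (N/2) log(2πσ²) + (N/(2σ²T)) S_N → λT/2 - λS/(2σ²) - λ²Q/(2σ²) - λR/σ²`. -/
theorem stmt_16 (T lam sig : ℝ) (hT : 0 < T) (hlam : 0 < lam) (hsig : 0 < sig)
    (y : ℕ → ℕ → ℝ)
    (δ : ℕ → ℝ) (hδ : ∀ N : ℕ, δ N = T / N)
    (SN QN RN : ℕ → ℝ)
    (hSN : ∀ N : ℕ, SN N = ∑ k ∈ Finset.range N, (y N (k+1) - y N k) ^ 2)
    (hQN : ∀ N : ℕ, QN N = δ N * ∑ k ∈ Finset.range N, (y N k) ^ 2)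
    (hRN : ∀ N : ℕ, RN N = ∑ k ∈ Finset.range N, y N k * (y N (k+1) - y N k))
    (ℓ : ℕ → ℝ)
    (hℓ : ∀ N : ℕ, ℓ N
      = -((N : ℝ) / 2) * Real.log (2 * Real.pi * sig ^ 2)
        - T / δ N * Real.log ((1 - Real.exp (-lam * δ N)) / (lam * δ N))
        - lam ^ 2 * δ N / (2 * sig ^ 2 * (1 - Real.exp (-lam * δ N)) ^ 2)
            * ∑ k ∈ Finset.range N, (y N (k+1) - y N k * Real.exp (-lam * δ N)) ^ 2)
    (S Q R : ℝ)
    (hS : Filter.Tendsto SN Filter.atTop (nhds S))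
    (hQ : Filter.Tendsto QN Filter.atTop (nhds Q))
    (hR : Filter.Tendsto RN Filter.atTop (nhds R)) :
    Filter.Tendsto
      (fun N : ℕ => ℓ N + (N : ℝ) / 2 * Real.log (2 * Real.pi * sig ^ 2)
        + (N : ℝ) / (2 * sig ^ 2 * T) * SN N)
      Filter.atTop
      (nhds (lam * T / 2 - lam * S / (2 * sig ^ 2)
        - lam ^ 2 * Q / (2 * sig ^ 2) - lam * R / sig ^ 2)) := by
  have hδ0 : Tendsto (fun N => lam * δ N) atTop (𝓝[≠] 0) := by
    refine tendsto_nhdsWithin_iff.mpr ⟨?_, ?_⟩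
    · have h := (tendsto_const_div_atTop_nhds_zero_nat T).const_mul lam
      simpa [hδ] using h
    · filter_upwards [eventually_gt_atTop 0] with N hN
      have hN' : (0 : ℝ) < N := by exact_mod_cast hN
      rw [hδ]
      exact (by positivity : (0 : ℝ) < lam * (T / N)).ne'
  have hlog := tendsto_log_expQuotient_div.comp hδ0
  have hsq := tendsto_inv_sq_expQuotient_sub_one_div.comp hδ0
  have hinv := tendsto_inv_expQuotient.comp hδ0
  have hlim := (((hlog.const_mul (-(lam * T))).sub
    ((hsq.mul hS).const_mul (lam / (2 * sig ^ 2)))).sub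
    (hQ.const_mul (lam ^ 2 / (2 * sig ^ 2)))).sub
    ((hinv.mul hR).const_mul (lam / sig ^ 2))
  refine (hlim.congr' ?_).trans_eq ?_
  · filter_upwards [eventually_gt_atTop 0] with N hN
    have hN' : (0 : ℝ) < N := by exact_mod_cast hN
    have hd : 0 < δ N := by rw [hδ]; positivity
    have hNT : (N : ℝ) = T / δ N := by rw [hδ]; field_simp
    have hx : 0 < lam * δ N := by positivity
    have hu : 0 < 1 - Real.exp (-lam * δ N) := by
      rw [sub_pos, Real.exp_lt_one_iff]
      linarith
    simp only [Function.comp_apply]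
    rw [hℓ, sum_sq_sub_mul, ← hSN, ← hRN, hQN, expQuotient_of_ne hx.ne', ← neg_mul lam (δ N), hNT]
    generalize Real.log ((1 - Real.exp (-lam * δ N)) / (lam * δ N)) = L
    generalize 1 - Real.exp (-lam * δ N) = u at *
    field_simp
    ring
  · congr 1
    ring
end
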